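/- arXiv:1402.5128 — 2 statements merged into one kernel-verified Lean document; each statement's English description precedes it below -/
import Mathlib

section
/- Let C be a nonempty bounded, closed and convex subset of a real Hilbert space H and let F : C × C → C be a weakly nonexpansive and demicompact operator. Then the set of coupled fixed points of F is nonempty, and for every λ ∈ (0,1) and every x₀ ∈ C, the sequence defined by xₙ₊₁ = λxₙ + (1−λ)F(xₙ, xₙ) converges strongly to some q ∈ C with F(q,q) = q. -/
open Filter Topology

/-!
Only the diagonal map `T z = F z z` matters: it is nonexpansive, and a sequence `u` with
`T uₙ - uₙ → 0` has a subsequence converging to a fixed point of `T`, which gives a coupled fixed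
point `(q, q)`. That the iterates satisfy `T xₙ - xₙ → 0` holds in every normed space: with
`yₙ = T xₙ` and `dₙ = ‖yₙ - xₙ‖`, the Goebel–Kirk inequality
`(1 + n(1 - λ)) dᵢ ≤ ‖yᵢ₊ₙ - xᵢ‖ + λ⁻ⁿ (dᵢ - dᵢ₊ₙ)` forces the limit `r` of the antitone sequence
`d` to satisfy `(1 + n(1 - λ)) r ≤ D` for all `n`, where `D` bounds all `‖yₘ - xₙ‖`; so `r = 0`.
The distances from `xₙ` to a fixed point decrease, so convergence of a subsequence is convergence
of the whole sequence.
-/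

section AveragedSequences

variable {E : Type*} [SeminormedAddCommGroup E] [NormedSpace ℝ E] {x y : ℕ → E} {l : ℝ}

theorem norm_succ_sub_self_of_averaged (hl1 : l ≤ 1)
    (hx : ∀ n, x (n + 1) = l • x n + (1 - l) • y n) (n : ℕ) :
    ‖x (n + 1) - x n‖ = (1 - l) * ‖y n - x n‖ := by
  have hstep : x (n + 1) - x n = (1 - l) • (y n - x n) := by rw [hx]; module
  rw [hstep, norm_smul, Real.norm_of_nonneg (sub_nonneg.2 hl1)]

theorem antitone_norm_sub_of_averaged (hl0 : 0 ≤ l) (hl1 : l ≤ 1)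
    (hx : ∀ n, x (n + 1) = l • x n + (1 - l) • y n)
    (hy : ∀ n, ‖y (n + 1) - y n‖ ≤ ‖x (n + 1) - x n‖) :
    Antitone fun n => ‖y n - x n‖ := by
  refine antitone_nat_of_succ_le fun n => ?_
  have hsplit : y (n + 1) - x (n + 1) = (y (n + 1) - y n) + l • (y n - x n) := by rw [hx]; module
  calc ‖y (n + 1) - x (n + 1)‖
      ≤ ‖y (n + 1) - y n‖ + ‖l • (y n - x n)‖ := hsplit ▸ norm_add_le _ _
    _ ≤ (1 - l) * ‖y n - x n‖ + l * ‖y n - x n‖ := by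
      rw [norm_smul, Real.norm_of_nonneg hl0, ← norm_succ_sub_self_of_averaged hl1 hx]
      gcongr
      exact hy n
    _ = ‖y n - x n‖ := by ring

theorem norm_sub_le_nat_mul_of_averaged (hl0 : 0 ≤ l) (hl1 : l ≤ 1)
    (hx : ∀ n, x (n + 1) = l • x n + (1 - l) • y n)
    (hy : ∀ n, ‖y (n + 1) - y n‖ ≤ ‖x (n + 1) - x n‖) (i n : ℕ) :
    ‖y (i + n) - y i‖ ≤ n * ((1 - l) * ‖y i - x i‖) := by
  have hstep (k : ℕ) : dist (y (i + k)) (y (i + (k + 1))) ≤ (1 - l) * ‖y i - x i‖ :=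
    calc dist (y (i + k)) (y (i + (k + 1)))
        = ‖y (i + k + 1) - y (i + k)‖ := by rw [dist_comm, dist_eq_norm, add_assoc]
      _ ≤ ‖x (i + k + 1) - x (i + k)‖ := hy _
      _ = (1 - l) * ‖y (i + k) - x (i + k)‖ := norm_succ_sub_self_of_averaged hl1 hx _
      _ ≤ (1 - l) * ‖y i - x i‖ := mul_le_mul_of_nonneg_left
        (antitone_norm_sub_of_averaged hl0 hl1 hx hy (Nat.le_add_right i k)) (sub_nonneg.2 hl1)
  simpa [← dist_eq_norm, dist_comm (y (i + n))] using
    dist_le_range_sum_of_dist_le (f := fun k => y (i + k)) n fun {k} _ => hstep k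

theorem pow_mul_one_add_mul_one_sub_le_one (hl0 : 0 ≤ l) (hl1 : l ≤ 1) (n : ℕ) :
    l ^ n * (1 + n * (1 - l)) ≤ 1 :=
  calc l ^ n * (1 + n * (1 - l))
      ≤ l ^ n * (1 + (1 - l)) ^ n := by
        gcongr
        exact one_add_mul_le_pow (by linarith) n
    _ = (l * (1 + (1 - l))) ^ n := (mul_pow _ _ _).symm
    _ ≤ 1 := pow_le_one₀ (mul_nonneg hl0 (by linarith)) (by nlinarith [sq_nonneg (1 - l)])

-- Multiplied through by `l ^ n`, so that no inverse powers occur.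
theorem goebel_kirk_inequality (hl0 : 0 ≤ l) (hl1 : l ≤ 1)
    (hx : ∀ n, x (n + 1) = l • x n + (1 - l) • y n)
    (hy : ∀ n, ‖y (n + 1) - y n‖ ≤ ‖x (n + 1) - x n‖) (i n : ℕ) :
    l ^ n * (1 + n * (1 - l)) * ‖y i - x i‖ ≤
      l ^ n * ‖y (i + n) - x i‖ + (‖y i - x i‖ - ‖y (i + n) - x (i + n)‖) := by
  induction n generalizing i with
  | zero => simp
  | succ n ih =>
    have ih_next := ih (i + 1)
    rw [show i + 1 + n = i + (n + 1) by ring] at ih_next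
    set Y := y (i + (n + 1))
    have hsplit : Y - x (i + 1) = l • (Y - x i) + (1 - l) • (Y - y i) := by rw [hx]; module
    have htriangle : ‖Y - x (i + 1)‖ ≤
        l * ‖Y - x i‖ + (1 - l) * ((n + 1) * ((1 - l) * ‖y i - x i‖)) :=
      calc ‖Y - x (i + 1)‖
          ≤ l * ‖Y - x i‖ + (1 - l) * ‖Y - y i‖ := by
            rw [hsplit]
            refine (norm_add_le _ _).trans_eq ?_
            rw [norm_smul, norm_smul, Real.norm_of_nonneg hl0,
              Real.norm_of_nonneg (sub_nonneg.2 hl1)]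
        _ ≤ _ := by
            have := norm_sub_le_nat_mul_of_averaged hl0 hl1 hx hy i (n + 1)
            push_cast at this
            exact add_le_add_right (mul_le_mul_of_nonneg_left this (sub_nonneg.2 hl1)) _
    have hdecrease : l ^ n * (1 + n * (1 - l)) * (‖y i - x i‖ - ‖y (i + 1) - x (i + 1)‖) ≤
        ‖y i - x i‖ - ‖y (i + 1) - x (i + 1)‖ :=
      mul_le_of_le_one_left
        (sub_nonneg.2 (antitone_norm_sub_of_averaged hl0 hl1 hx hy i.le_succ))
        (pow_mul_one_add_mul_one_sub_le_one hl0 hl1 n)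
    have hscaled := mul_le_mul_of_nonneg_left htriangle (pow_nonneg hl0 n)
    push_cast
    linear_combination ih_next + hdecrease + hscaled

theorem exists_norm_sub_le_of_averaged (hl0 : 0 ≤ l) (hl1 : l ≤ 1)
    (hx : ∀ n, x (n + 1) = l • x n + (1 - l) • y n)
    (hy : ∀ n, ‖y (n + 1) - y n‖ ≤ ‖x (n + 1) - x n‖) (hbdd : Bornology.IsBounded (Set.range x)) :
    ∃ D, ∀ m n, ‖y m - x n‖ ≤ D := by
  obtain ⟨R, hR⟩ := Metric.isBounded_range_iff.1 hbdd
  refine ⟨‖y 0 - x 0‖ + R, fun m n => ?_⟩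
  calc ‖y m - x n‖
      ≤ ‖y m - x m‖ + ‖x m - x n‖ := norm_sub_le_norm_sub_add_norm_sub _ _ _
    _ ≤ ‖y 0 - x 0‖ + R :=
      add_le_add (antitone_norm_sub_of_averaged hl0 hl1 hx hy m.zero_le)
        (dist_eq_norm (x m) (x n) ▸ hR m n)

theorem tendsto_norm_sub_zero_of_averaged (hl0 : 0 < l) (hl1 : l < 1)
    (hx : ∀ n, x (n + 1) = l • x n + (1 - l) • y n)
    (hy : ∀ n, ‖y (n + 1) - y n‖ ≤ ‖x (n + 1) - x n‖) (hbdd : Bornology.IsBounded (Set.range x)) :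
    Tendsto (fun n => ‖y n - x n‖) atTop (𝓝 0) := by
  have hanti := antitone_norm_sub_of_averaged hl0.le hl1.le hx hy
  obtain ⟨r, hr⟩ : ∃ r, Tendsto (fun n => ‖y n - x n‖) atTop (𝓝 r) :=
    ⟨_, tendsto_atTop_ciInf hanti ⟨0, Set.forall_mem_range.2 fun _ => norm_nonneg _⟩⟩
  obtain ⟨D, hD⟩ := exists_norm_sub_le_of_averaged hl0.le hl1.le hx hy hbdd
  have hlinear (n : ℕ) : (1 + n * (1 - l)) * r ≤ D := by
    have hshift : Tendsto (fun i => ‖y (i + n) - x (i + n)‖) atTop (𝓝 r) :=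
      hr.comp (tendsto_add_atTop_nat n)
    have hlim : l ^ n * (1 + n * (1 - l)) * r ≤ l ^ n * D + (r - r) :=
      le_of_tendsto_of_tendsto' (hr.const_mul _) (tendsto_const_nhds.add (hr.sub hshift)) fun i =>
        (goebel_kirk_inequality hl0.le hl1.le hx hy i n).trans
          (add_le_add_left (mul_le_mul_of_nonneg_left (hD (i + n) i) (pow_nonneg hl0.le n)) _)
    rw [sub_self, add_zero, mul_assoc] at hlim
    exact le_of_mul_le_mul_left hlim (pow_pos hl0 n)
  have hr_nonneg : 0 ≤ r := ge_of_tendsto' hr fun _ => norm_nonneg _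
  have hr_nonpos : r ≤ 0 := by
    by_contra! hr_pos
    obtain ⟨n, hn⟩ := exists_nat_gt (D / ((1 - l) * r))
    rw [div_lt_iff₀ (mul_pos (sub_pos.2 hl1) hr_pos)] at hn
    linarith [hlinear n]
  exact le_antisymm hr_nonpos hr_nonneg ▸ hr

end AveragedSequences

/-- A self-map `T` is demicompact on `C` if every bounded sequence `u` in `C` for which `T uₙ - uₙ`
converges has a convergent subsequence; this is the compactness needed to pass from approximate
fixed points to fixed points. The limit is not required to lie in `C`. -/
def DemicompactOn {E : Type*} [SeminormedAddCommGroup E] (T : E → E) (C : Set E) : Prop :=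
  ∀ u : ℕ → E, (∀ n, u n ∈ C) → Bornology.IsBounded (Set.range u) →
    (∃ s, Tendsto (fun n => T (u n) - u n) atTop (𝓝 s)) →
    ∃ φ : ℕ → ℕ, StrictMono φ ∧ ∃ u₀, Tendsto (u ∘ φ) atTop (𝓝 u₀)

section Krasnoselskij

variable {E : Type*} [NormedAddCommGroup E] {C : Set E} {T : E → E}

theorem DemicompactOn.exists_subseq_tendsto_isFixedPt (hdemi : DemicompactOn T C)
    (hT : ContinuousOn T C) (hcl : IsClosed C) {u : ℕ → E} (hu : ∀ n, u n ∈ C)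
    (hbdd : Bornology.IsBounded (Set.range u))
    (hreg : Tendsto (fun n => T (u n) - u n) atTop (𝓝 0)) :
    ∃ q ∈ C, Function.IsFixedPt T q ∧ ∃ φ : ℕ → ℕ, StrictMono φ ∧ Tendsto (u ∘ φ) atTop (𝓝 q) := by
  obtain ⟨φ, hφ, q, hq⟩ := hdemi u hu hbdd ⟨0, hreg⟩
  have hqC : q ∈ C := hcl.mem_of_tendsto hq (Eventually.of_forall fun n => hu (φ n))
  have hTu : Tendsto (fun n => T (u (φ n))) atTop (𝓝 (T q)) :=
    (hT q hqC).tendsto.comp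
      (tendsto_nhdsWithin_iff.2 ⟨hq, Eventually.of_forall fun n => hu (φ n)⟩)
  have hTu_to_q : Tendsto (fun n => T (u (φ n))) atTop (𝓝 q) := by
    simpa using (hreg.comp hφ.tendsto_atTop).add hq
  exact ⟨q, hqC, tendsto_nhds_unique hTu hTu_to_q, φ, hφ, hq⟩

variable [NormedSpace ℝ E] {l : ℝ} {x : ℕ → E}

theorem krasnoselskij_mem (hconv : Convex ℝ C) (hmaps : Set.MapsTo T C C) (hl0 : 0 ≤ l)
    (hl1 : l ≤ 1) (hx0 : x 0 ∈ C) (hx : ∀ n, x (n + 1) = l • x n + (1 - l) • T (x n)) (n : ℕ) :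
    x n ∈ C := by
  induction n with
  | zero => exact hx0
  | succ n ih => exact hx n ▸ hconv ih (hmaps ih) hl0 (sub_nonneg.2 hl1) (add_sub_cancel l 1)

theorem antitone_dist_isFixedPt_of_krasnoselskij (hT : LipschitzOnWith 1 T C) (hl0 : 0 ≤ l)
    (hl1 : l ≤ 1) (hxC : ∀ n, x n ∈ C) (hx : ∀ n, x (n + 1) = l • x n + (1 - l) • T (x n))
    {q : E} (hqC : q ∈ C) (hq : Function.IsFixedPt T q) :
    Antitone fun n => dist (x n) q := by
  refine antitone_nat_of_succ_le fun n => ?_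
  have hnonexp : dist (T (x n)) q ≤ dist (x n) q := by
    simpa [hq.eq] using hT.dist_le_mul (x n) (hxC n) q hqC
  have hball : l • x n + (1 - l) • T (x n) ∈ Metric.closedBall q (dist (x n) q) :=
    convex_closedBall q _ (Metric.mem_closedBall.2 le_rfl) (Metric.mem_closedBall.2 hnonexp) hl0
      (sub_nonneg.2 hl1) (add_sub_cancel l 1)
  exact hx n ▸ hball

theorem exists_isFixedPt_tendsto_krasnoselskij (hbdd : Bornology.IsBounded C) (hcl : IsClosed C)
    (hconv : Convex ℝ C) (hmaps : Set.MapsTo T C C) (hT : LipschitzOnWith 1 T C)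
    (hdemi : DemicompactOn T C) (hl0 : 0 < l) (hl1 : l < 1) (hx0 : x 0 ∈ C)
    (hx : ∀ n, x (n + 1) = l • x n + (1 - l) • T (x n)) :
    ∃ q ∈ C, Function.IsFixedPt T q ∧ Tendsto x atTop (𝓝 q) := by
  have hxC := krasnoselskij_mem hconv hmaps hl0.le hl1.le hx0 hx
  have hx_bdd : Bornology.IsBounded (Set.range x) := hbdd.subset (Set.range_subset_iff.2 hxC)
  have hnonexp (n : ℕ) : ‖T (x (n + 1)) - T (x n)‖ ≤ ‖x (n + 1) - x n‖ := by
    simpa using hT.norm_sub_le (hxC (n + 1)) (hxC n)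
  have hreg : Tendsto (fun n => T (x n) - x n) atTop (𝓝 0) :=
    tendsto_zero_iff_norm_tendsto_zero.2
      (tendsto_norm_sub_zero_of_averaged hl0 hl1 hx hnonexp hx_bdd)
  obtain ⟨q, hqC, hq, φ, hφ, hlim⟩ :=
    hdemi.exists_subseq_tendsto_isFixedPt hT.continuousOn hcl hxC hx_bdd hreg
  have hanti := antitone_dist_isFixedPt_of_krasnoselskij hT hl0.le hl1.le hxC hx hqC hq
  refine ⟨q, hqC, hq, tendsto_iff_dist_tendsto_zero.2 ?_⟩
  exact (tendsto_iff_tendsto_subseq_of_antitone hanti hφ.tendsto_atTop).2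
    (tendsto_iff_dist_tendsto_zero.1 hlim)

end Krasnoselskij

section Coupled

variable {E : Type*} [SeminormedAddCommGroup E] {F : E → E → E} {C : Set E}

/-- Weak nonexpansiveness of a two-variable map on `C × C`, the Lipschitz condition of the coupled
fixed point theorem. `F` is curried and total, and only its values on `C × C` matter. -/
def WeaklyNonexpansiveOn (F : E → E → E) (C : Set E) : Prop :=
  ∃ a b : ℝ, 0 ≤ a ∧ 0 ≤ b ∧ a + b ≤ 1 ∧ ∀ x ∈ C, ∀ y ∈ C, ∀ u ∈ C, ∀ v ∈ C,
    ‖F x y - F u v‖ ≤ a * ‖x - u‖ + b * ‖y - v‖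

/-- Demicompactness of a two-variable map on `C × C`, the compactness condition of the coupled
fixed point theorem. The limits `u₀` and `v₀` are not required to lie in `C`. -/
def CoupledDemicompactOn (F : E → E → E) (C : Set E) : Prop :=
  ∀ u v : ℕ → E, (∀ n, u n ∈ C) → (∀ n, v n ∈ C) →
    Bornology.IsBounded (Set.range u) → Bornology.IsBounded (Set.range v) →
    (∃ su, Tendsto (fun n => F (u n) (v n) - u n) atTop (𝓝 su)) →
    (∃ sv, Tendsto (fun n => F (v n) (u n) - v n) atTop (𝓝 sv)) →
    ∃ φ : ℕ → ℕ, StrictMono φ ∧ ∃ u₀ v₀,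
      Tendsto (u ∘ φ) atTop (𝓝 u₀) ∧ Tendsto (v ∘ φ) atTop (𝓝 v₀)

theorem WeaklyNonexpansiveOn.lipschitzOnWith_diagonal (hF : WeaklyNonexpansiveOn F C) :
    LipschitzOnWith 1 (fun z => F z z) C := by
  obtain ⟨a, b, -, -, hab, hF⟩ := hF
  refine LipschitzOnWith.of_dist_le_mul fun z hz w hw => ?_
  rw [dist_eq_norm, dist_eq_norm, NNReal.coe_one]
  calc ‖F z z - F w w‖
      ≤ a * ‖z - w‖ + b * ‖z - w‖ := hF z hz z hz w hw w hw
    _ = (a + b) * ‖z - w‖ := (add_mul _ _ _).symm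
    _ ≤ 1 * ‖z - w‖ := by gcongr

theorem CoupledDemicompactOn.demicompactOn_diagonal (hF : CoupledDemicompactOn F C) :
    DemicompactOn (fun z => F z z) C := by
  intro u hu hbdd hconv
  obtain ⟨φ, hφ, q, -, hq, -⟩ := hF u u hu hu hbdd hbdd hconv hconv
  exact ⟨φ, hφ, q, hq⟩

end Coupled

theorem krasnoselskij_strong_convergence_demicompact_general
    {E : Type*} [NormedAddCommGroup E] [NormedSpace ℝ E] {C : Set E} (hne : C.Nonempty)
    (hbdd : Bornology.IsBounded C) (hcl : IsClosed C) (hconv : Convex ℝ C)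
    {F : E → E → E} (hmaps : ∀ x ∈ C, ∀ y ∈ C, F x y ∈ C)
    (hF : WeaklyNonexpansiveOn F C) (hdemi : CoupledDemicompactOn F C) :
    (∃ x ∈ C, ∃ y ∈ C, F x y = x ∧ F y x = y) ∧
      ∀ l : ℝ, 0 < l → l < 1 → ∀ x : ℕ → E, x 0 ∈ C →
        (∀ n, x (n + 1) = l • x n + (1 - l) • F (x n) (x n)) →
        ∃ q ∈ C, F q q = q ∧ Tendsto x atTop (𝓝 q) := by
  have hiter (l : ℝ) (hl0 : 0 < l) (hl1 : l < 1) (x : ℕ → E) (hx0 : x 0 ∈ C)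
      (hx : ∀ n, x (n + 1) = l • x n + (1 - l) • F (x n) (x n)) :
      ∃ q ∈ C, F q q = q ∧ Tendsto x atTop (𝓝 q) :=
    exists_isFixedPt_tendsto_krasnoselskij hbdd hcl hconv (fun z hz => hmaps z hz z hz)
      hF.lipschitzOnWith_diagonal hdemi.demicompactOn_diagonal hl0 hl1 hx0 hx
  refine ⟨?_, hiter⟩
  obtain ⟨p, hp⟩ := hne
  let averaged (z : E) : E := (1 / 2 : ℝ) • z + (1 - 1 / 2 : ℝ) • F z z
  obtain ⟨q, hqC, hq, -⟩ := hiter (1 / 2) (by norm_num) (by norm_num) (fun n => averaged^[n] p) hp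
    fun n => Function.iterate_succ_apply' averaged n p
  exact ⟨q, hqC, q, hqC, hq, hq⟩

/-- If `F : C × C → C` is weakly nonexpansive and demicompact on a
nonempty bounded closed convex subset `C` of a real Hilbert space, then the set of
coupled fixed points of `F` is nonempty and, for every `λ ∈ (0,1)` and `x₀ ∈ C`, the
Krasnoselskij iteration `xₙ₊₁ = λxₙ + (1−λ)F(xₙ,xₙ)` converges strongly to some
`q ∈ C` with `F(q,q) = q`. -/
theorem krasnoselskij_strong_convergence_demicompact
    {H : Type*} [NormedAddCommGroup H] [InnerProductSpace ℝ H] [CompleteSpace H]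
    (C : Set H) (hne : C.Nonempty) (hbdd : Bornology.IsBounded C)
    (hcl : IsClosed C) (hconv : Convex ℝ C)
    (F : H → H → H) (hmaps : ∀ x ∈ C, ∀ y ∈ C, F x y ∈ C)
    (a b : ℝ) (ha : 0 ≤ a) (hb : 0 ≤ b) (hab : a + b ≤ 1)
    (hF : ∀ x ∈ C, ∀ y ∈ C, ∀ u ∈ C, ∀ v ∈ C,
      ‖F x y - F u v‖ ≤ a * ‖x - u‖ + b * ‖y - v‖)
    (hdemi : ∀ u v : ℕ → H, (∀ n, u n ∈ C) → (∀ n, v n ∈ C) →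
      Bornology.IsBounded (Set.range u) → Bornology.IsBounded (Set.range v) →
      (∃ su : H, Tendsto (fun n => F (u n) (v n) - u n) atTop (𝓝 su)) →
      (∃ sv : H, Tendsto (fun n => F (v n) (u n) - v n) atTop (𝓝 sv)) →
      ∃ φ : ℕ → ℕ, StrictMono φ ∧ ∃ u₀ v₀ : H,
        Tendsto (u ∘ φ) atTop (𝓝 u₀) ∧ Tendsto (v ∘ φ) atTop (𝓝 v₀)) :
    (∃ x ∈ C, ∃ y ∈ C, F x y = x ∧ F y x = y) ∧
      ∀ l : ℝ, 0 < l → l < 1 → ∀ x : ℕ → H, x 0 ∈ C →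
        (∀ n, x (n + 1) = l • x n + (1 - l) • F (x n) (x n)) →
        ∃ q ∈ C, F q q = q ∧ Tendsto x atTop (𝓝 q) :=
  krasnoselskij_strong_convergence_demicompact_general hne hbdd hcl hconv hmaps
    ⟨a, b, ha, hb, hab, hF⟩ hdemi
end

section
/- Let H be a real Hilbert space, C a nonempty closed, bounded and convex subset of H, and F : C × C → C a weakly nonexpansive operator. Then for every λ ∈ (0,1) and x₀ ∈ C, the sequence defined by xₙ₊₁ = (1−λ)xₙ + λF(xₙ, xₙ) converges weakly to some p ∈ C with F(p,p) = p; that is, for every continuous linear functional f on H, f(xₙ) → f(p) as n → ∞. -/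
open Filter Topology

/-!
The diagonal `T z = F z z` is nonexpansive on `C`. It has a fixed point: the contractions
`z ↦ (1 - s) • c + s • T z` have fixed points `y s` with `y s - T (y s) → 0` as `s → 1`, and by
demiclosedness of `1 - T` every weak cluster point of such a family is fixed by `T`. Along the
iteration, the distance to each fixed point `q` decreases, and the identity
`‖(1 - t) • u + t • v‖² = (1 - t) ‖u‖² + t ‖v‖² - t (1 - t) ‖u - v‖²` bounds
`t (1 - t) ‖x n - T (x n)‖²` by the decrease of `‖x n - q‖²`. Hence `x n - T (x n) → 0`, so all weak
cluster points of `x` are fixed points. There is only one of them, because convergence of both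
`‖x n - p‖` and `‖x n - r‖` forces convergence of `⟪p - r, x n⟫` (Opial).
-/

open Bornology Function Metric Set
open scoped InnerProductSpace NNReal

section WeakTopology

theorem tendsto_toWeakSpace_nhds_iff {𝕜 E ι : Type*} [CommSemiring 𝕜] [TopologicalSpace 𝕜]
    [ContinuousAdd 𝕜] [ContinuousConstSMul 𝕜 𝕜] [AddCommMonoid E] [Module 𝕜 E]
    [TopologicalSpace E] {l : Filter ι} {x : ι → E} {p : E} :
    Tendsto (fun i ↦ toWeakSpace 𝕜 E (x i)) l (𝓝 (toWeakSpace 𝕜 E p)) ↔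
      ∀ f : StrongDual 𝕜 E, Tendsto (fun i ↦ f (x i)) l (𝓝 (f p)) := by
  have heval : IsInducing fun (y : WeakSpace 𝕜 E) (f : StrongDual 𝕜 E) ↦
      f ((toWeakSpace 𝕜 E).symm y) := ⟨rfl⟩
  rw [heval.tendsto_nhds_iff, tendsto_pi_nhds]
  rfl

theorem surjective_inclusionInDoubleDual (𝕜 H : Type*) [RCLike 𝕜] [NormedAddCommGroup H]
    [InnerProductSpace 𝕜 H] [CompleteSpace H] :
    Surjective (NormedSpace.inclusionInDoubleDual 𝕜 H) := by
  intro Φ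
  let toDual := InnerProductSpace.toDual 𝕜 H
  let φ : StrongDual 𝕜 H :=
    (starL 𝕜 : 𝕜 ≃L⋆[𝕜] 𝕜).toContinuousLinearMap.comp
      (Φ.comp toDual.toContinuousLinearEquiv.toContinuousLinearMap)
  refine ⟨toDual.symm φ, ContinuousLinearMap.ext fun f ↦ ?_⟩
  obtain ⟨y, rfl⟩ := toDual.surjective f
  calc ⟪y, toDual.symm φ⟫_𝕜 = starRingEnd 𝕜 ⟪toDual.symm φ, y⟫_𝕜 := (inner_conj_symm _ _).symm
    _ = starRingEnd 𝕜 (φ y) := by rw [InnerProductSpace.toDual_symm_apply]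
    _ = Φ (toDual y) := star_star _

variable {𝕜 E : Type*} [RCLike 𝕜] [NormedAddCommGroup E] [NormedSpace 𝕜 E] [NormedSpace ℝ E]
  [IsScalarTower ℝ 𝕜 E] {C : Set E}

theorem isCompact_toWeakSpace_image
    (hE : Surjective (NormedSpace.inclusionInDoubleDual 𝕜 E)) (hcl : IsClosed C)
    (hbdd : IsBounded C) (hconv : Convex ℝ C) : IsCompact (toWeakSpace 𝕜 E '' C) := by
  have hsurj : Surjective (NormedSpace.inclusionInDoubleDualWeak 𝕜 E) := hE
  rw [← hcl.closure_eq, hconv.toWeakSpace_closure 𝕜]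
  refine NormedSpace.isCompact_closure_of_isBounded 𝕜 E _ ?_ (by simp [hsurj.range_eq])
  rwa [preimage_image_eq _ (toWeakSpace 𝕜 E).injective]

theorem mem_of_mapClusterPt_toWeakSpace {ι : Type*} {l : Filter ι} {x : ι → E} {p : E}
    (hcl : IsClosed C) (hconv : Convex ℝ C) (hxC : ∀ᶠ i in l, x i ∈ C)
    (hp : MapClusterPt (toWeakSpace 𝕜 E p) l fun i ↦ toWeakSpace 𝕜 E (x i)) : p ∈ C := by
  have hweakcl : IsClosed (toWeakSpace 𝕜 E '' C) := by
    rw [← closure_eq_iff_isClosed, ← hconv.toWeakSpace_closure 𝕜, hcl.closure_eq]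
  have hxC' : ∀ᶠ i in l, toWeakSpace 𝕜 E (x i) ∈ toWeakSpace 𝕜 E '' C :=
    hxC.mono fun i hi ↦ mem_image_of_mem _ hi
  exact (toWeakSpace 𝕜 E).injective.mem_set_image.1 (hweakcl.mem_of_mapClusterPt hp hxC')

end WeakTopology

section Opial

theorem exists_tendsto_inner_of_tendsto_norm_sub {H ι : Type*} [SeminormedAddCommGroup H]
    [InnerProductSpace ℝ H] {l : Filter ι} {x : ι → H} {p r : H} {a b : ℝ}
    (hp : Tendsto (fun i ↦ ‖x i - p‖) l (𝓝 a)) (hr : Tendsto (fun i ↦ ‖x i - r‖) l (𝓝 b)) :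
    ∃ c, Tendsto (fun i ↦ ⟪p - r, x i⟫_ℝ) l (𝓝 c) := by
  have hpolar : ∀ i, ⟪p - r, x i⟫_ℝ =
      (‖p‖ ^ 2 - ‖r‖ ^ 2 - (‖x i - p‖ ^ 2 - ‖x i - r‖ ^ 2)) / 2 := fun i ↦ by
    rw [norm_sub_sq_real, norm_sub_sq_real, inner_sub_left, real_inner_comm p, real_inner_comm r]
    ring
  simp only [hpolar]
  exact ⟨_, (((hp.pow 2).sub (hr.pow 2)).const_sub _).div_const 2⟩

variable {H ι : Type*} [NormedAddCommGroup H] [InnerProductSpace ℝ H] {l : Filter ι} {x : ι → H}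

theorem eq_of_mapClusterPt_toWeakSpace_of_tendsto_inner {p r : H} {c : ℝ}
    (hp : MapClusterPt (toWeakSpace ℝ H p) l fun i ↦ toWeakSpace ℝ H (x i))
    (hr : MapClusterPt (toWeakSpace ℝ H r) l fun i ↦ toWeakSpace ℝ H (x i))
    (hc : Tendsto (fun i ↦ ⟪p - r, x i⟫_ℝ) l (𝓝 c)) : p = r := by
  have hinner : ∀ z, MapClusterPt (toWeakSpace ℝ H z) l (fun i ↦ toWeakSpace ℝ H (x i)) →
      ⟪p - r, z⟫_ℝ = c := fun z hz ↦ by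
    obtain ⟨U, hU, hlim⟩ := mapClusterPt_iff_ultrafilter.1 hz
    exact tendsto_nhds_unique (tendsto_toWeakSpace_nhds_iff.1 hlim (innerSL ℝ (p - r)))
      (hc.mono_left hU)
  have hself : ⟪p - r, p - r⟫_ℝ = 0 := by
    rw [inner_sub_right, hinner p hp, hinner r hr, sub_self]
  exact sub_eq_zero.1 (inner_self_eq_zero.1 hself)

theorem exists_tendsto_toWeakSpace_of_tendsto_norm_sub [NeBot l] {S : Set H}
    {K : Set (WeakSpace ℝ H)} (hK : IsCompact K) (hxK : ∀ᶠ i in l, toWeakSpace ℝ H (x i) ∈ K)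
    (hdist : ∀ p ∈ S, ∃ a, Tendsto (fun i ↦ ‖x i - p‖) l (𝓝 a))
    (hcluster : ∀ p, MapClusterPt (toWeakSpace ℝ H p) l (fun i ↦ toWeakSpace ℝ H (x i)) → p ∈ S) :
    ∃ p ∈ S, Tendsto (fun i ↦ toWeakSpace ℝ H (x i)) l (𝓝 (toWeakSpace ℝ H p)) := by
  obtain ⟨p', -, hp⟩ := hK.exists_mapClusterPt_of_frequently hxK.frequently
  obtain ⟨p, rfl⟩ := (toWeakSpace ℝ H).surjective p'
  refine ⟨p, hcluster p hp, hK.tendsto_nhds_of_unique_mapClusterPt hxK fun r' _ hr ↦ ?_⟩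
  obtain ⟨r, rfl⟩ := (toWeakSpace ℝ H).surjective r'
  obtain ⟨a, ha⟩ := hdist r (hcluster r hr)
  obtain ⟨b, hb⟩ := hdist p (hcluster p hp)
  obtain ⟨c, hc⟩ := exists_tendsto_inner_of_tendsto_norm_sub ha hb
  rw [eq_of_mapClusterPt_toWeakSpace_of_tendsto_inner hr hp hc]

end Opial

section Demiclosedness

theorem norm_sub_sq_le_of_norm_sub_le_norm_sub {H : Type*} [SeminormedAddCommGroup H]
    [InnerProductSpace ℝ H] {y p u v : H} (h : ‖u - v‖ ≤ ‖y - p‖) :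
    ‖p - v‖ ^ 2 ≤ ‖y - u‖ ^ 2 + 2 * (‖y - u‖ * ‖y - p‖) - 2 * ⟪p - v, y - p⟫_ℝ := by
  have htriangle : ‖y - v‖ ≤ ‖y - u‖ + ‖y - p‖ :=
    (norm_sub_le_norm_sub_add_norm_sub y u v).trans (by gcongr)
  have hexpand : ‖y - v‖ ^ 2 = ‖y - p‖ ^ 2 + 2 * ⟪p - v, y - p⟫_ℝ + ‖p - v‖ ^ 2 := by
    rw [← sub_add_sub_cancel y p v, norm_add_sq_real, real_inner_comm]
  have hsq : ‖y - v‖ ^ 2 ≤ (‖y - u‖ + ‖y - p‖) ^ 2 := by gcongr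
  linarith

theorem isFixedPt_of_mapClusterPt_toWeakSpace {H ι : Type*} [NormedAddCommGroup H]
    [InnerProductSpace ℝ H] {l : Filter ι} {x : ι → H} {p : H} {C : Set H} {T : H → H}
    (hT : LipschitzOnWith 1 T C) (hpC : p ∈ C) (hxC : ∀ᶠ i in l, x i ∈ C)
    (hbdd : IsBoundedUnder (· ≤ ·) l fun i ↦ ‖x i‖)
    (hreg : Tendsto (fun i ↦ x i - T (x i)) l (𝓝 0))
    (hp : MapClusterPt (toWeakSpace ℝ H p) l fun i ↦ toWeakSpace ℝ H (x i)) : IsFixedPt T p := by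
  obtain ⟨U, hU, hlim⟩ := mapClusterPt_iff_ultrafilter.1 hp
  have hres : Tendsto (fun i ↦ ‖x i - T (x i)‖) U (𝓝 0) := by simpa using (hreg.mono_left hU).norm
  have hinner : Tendsto (fun i ↦ ⟪p - T p, x i - p⟫_ℝ) U (𝓝 0) := by
    simpa only [innerSL_apply_apply, ← inner_sub_right, sub_self, inner_zero_right] using
      (tendsto_toWeakSpace_nhds_iff.1 hlim (innerSL ℝ (p - T p))).sub_const ⟪p - T p, p⟫_ℝ
  have hdist : IsBoundedUnder (· ≤ ·) (U : Filter ι) (norm ∘ fun i ↦ ‖x i - p‖) := by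
    obtain ⟨R, hR⟩ := hbdd.mono hU
    refine ⟨R + ‖p‖, eventually_map.2 ((eventually_map.1 hR).mono fun i hi ↦ ?_)⟩
    simpa using (norm_sub_le (x i) p).trans (add_le_add_left hi ‖p‖)
  have hbound : Tendsto (fun i ↦ ‖x i - T (x i)‖ ^ 2 + 2 * (‖x i - T (x i)‖ * ‖x i - p‖) -
      2 * ⟪p - T p, x i - p⟫_ℝ) U (𝓝 0) := by
    simpa using ((hres.pow 2).add ((hres.zero_mul_isBoundedUnder_le hdist).const_mul 2)).sub
      (hinner.const_mul 2)
  have hle : ‖p - T p‖ ^ 2 ≤ 0 := by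
    refine ge_of_tendsto hbound ((hxC.filter_mono hU).mono fun i hi ↦ ?_)
    exact norm_sub_sq_le_of_norm_sub_le_norm_sub (by simpa using hT.norm_sub_le hi hpC)
  have hzero : p - T p = 0 := by simpa using hle.antisymm (sq_nonneg _)
  exact (sub_eq_zero.1 hzero).symm

end Demiclosedness

section Existence

section NormedSpace

variable {E : Type*} [NormedAddCommGroup E] [NormedSpace ℝ E] {C : Set E} {T : E → E}

theorem exists_mem_smul_add_smul_apply_eq (hT : LipschitzOnWith 1 T C) (hC : IsComplete C)
    (hconv : Convex ℝ C) (hTC : MapsTo T C C) {c : E} (hc : c ∈ C) {s : ℝ≥0} (hs : s < 1) :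
    ∃ y ∈ C, (1 - s : ℝ) • c + (s : ℝ) • T y = y := by
  have hmaps : MapsTo (fun y ↦ (1 - s : ℝ) • c + (s : ℝ) • T y) C C := fun y hy ↦
    hconv hc (hTC hy) (sub_nonneg.2 (NNReal.coe_le_one.2 hs.le)) s.coe_nonneg (sub_add_cancel _ _)
  have hlip : LipschitzOnWith s (fun y ↦ (1 - s : ℝ) • c + (s : ℝ) • T y) C :=
    LipschitzOnWith.of_dist_le_mul fun y hy z hz ↦ by
      rw [dist_add_left, dist_smul₀, Real.norm_of_nonneg s.coe_nonneg]
      gcongr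
      simpa using hT.dist_le_mul y hy z hz
  obtain ⟨y, hyC, hy, -⟩ := ContractingWith.exists_fixedPoint' hC hmaps
    ⟨hs, hlip.mapsToRestrict hmaps⟩ hc (edist_ne_top _ _)
  exact ⟨y, hyC, hy⟩

theorem exists_seq_mem_tendsto_sub_apply_zero (hT : LipschitzOnWith 1 T C) (hC : IsComplete C)
    (hbdd : IsBounded C) (hconv : Convex ℝ C) (hTC : MapsTo T C C) (hne : C.Nonempty) :
    ∃ y : ℕ → E, (∀ n, y n ∈ C) ∧ Tendsto (fun n ↦ y n - T (y n)) atTop (𝓝 0) := by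
  obtain ⟨c, hc⟩ := hne
  obtain ⟨s, -, hs, hslim⟩ := exists_seq_strictMono_tendsto' (zero_lt_one' ℝ≥0)
  choose y hyC hy using fun n ↦
    exists_mem_smul_add_smul_apply_eq hT hC hconv hTC hc (hs n).2
  refine ⟨y, hyC, ?_⟩
  have hsub : ∀ n, y n - T (y n) = (1 - s n : ℝ) • (c - T (y n)) := fun n ↦ by
    nth_rewrite 1 [← hy n]
    module
  have hcoeff : Tendsto (fun n ↦ (1 - s n : ℝ)) atTop (𝓝 0) := by
    simpa using (NNReal.tendsto_coe.2 hslim).const_sub 1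
  obtain ⟨R, hR⟩ := hbdd.subset_closedBall c
  have hbound : IsBoundedUnder (· ≤ ·) atTop (norm ∘ fun n ↦ c - T (y n)) :=
    isBoundedUnder_of ⟨R, fun n ↦ by
      simpa only [comp_apply, mem_closedBall_iff_norm'] using hR (hTC (hyC n))⟩
  simpa only [hsub] using hcoeff.zero_smul_isBoundedUnder_le hbound

end NormedSpace

theorem exists_isFixedPt_of_lipschitzOnWith_one {H : Type*} [NormedAddCommGroup H]
    [InnerProductSpace ℝ H] [CompleteSpace H] {C : Set H} {T : H → H}
    (hT : LipschitzOnWith 1 T C) (hcl : IsClosed C) (hbdd : IsBounded C) (hconv : Convex ℝ C)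
    (hTC : MapsTo T C C) (hne : C.Nonempty) : ∃ p ∈ C, IsFixedPt T p := by
  obtain ⟨y, hyC, hreg⟩ :=
    exists_seq_mem_tendsto_sub_apply_zero hT hcl.isComplete hbdd hconv hTC hne
  have hcompact : IsCompact (toWeakSpace ℝ H '' C) :=
    isCompact_toWeakSpace_image (surjective_inclusionInDoubleDual ℝ H) hcl hbdd hconv
  obtain ⟨_, ⟨p, hpC, rfl⟩, hp⟩ := hcompact.exists_mapClusterPt (f := atTop)
    (u := fun n ↦ toWeakSpace ℝ H (y n))
    (tendsto_principal.2 <| .of_forall fun n ↦ mem_image_of_mem _ (hyC n))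
  obtain ⟨R, hR⟩ := hbdd.exists_norm_le
  exact ⟨p, hpC, isFixedPt_of_mapClusterPt_toWeakSpace hT hpC (.of_forall hyC)
    (isBoundedUnder_of ⟨R, fun n ↦ hR _ (hyC n)⟩) hreg hp⟩

end Existence

section Krasnoselskij

theorem norm_one_sub_smul_add_smul_sq {H : Type*} [SeminormedAddCommGroup H]
    [InnerProductSpace ℝ H] (t : ℝ) (u v : H) :
    ‖(1 - t) • u + t • v‖ ^ 2 =
      (1 - t) * ‖u‖ ^ 2 + t * ‖v‖ ^ 2 - t * (1 - t) * ‖u - v‖ ^ 2 := by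
  rw [norm_add_sq_real, norm_sub_sq_real, real_inner_smul_left, real_inner_smul_right, norm_smul,
    norm_smul, mul_pow, mul_pow, Real.norm_eq_abs, Real.norm_eq_abs, sq_abs, sq_abs]
  ring

/-- The sequence `x` is a Krasnoselskij iteration of `T` with constant step `t`. It is encoded as a
recurrence, so that the starting point `x 0` is arbitrary. -/
def IsKrasnoselskijSeq {E : Type*} [AddCommGroup E] [Module ℝ E] (T : E → E) (t : ℝ)
    (x : ℕ → E) : Prop :=
  ∀ n, x (n + 1) = (1 - t) • x n + t • T (x n)

namespace IsKrasnoselskijSeq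

theorem mem {E : Type*} [AddCommGroup E] [Module ℝ E] {T : E → E} {t : ℝ} {x : ℕ → E} {C : Set E}
    (hx : IsKrasnoselskijSeq T t x) (ht0 : 0 ≤ t) (ht1 : t ≤ 1) (hconv : Convex ℝ C)
    (hTC : MapsTo T C C) (hx0 : x 0 ∈ C) (n : ℕ) : x n ∈ C := by
  induction n with
  | zero => exact hx0
  | succ n ih =>
    rw [hx n]
    exact hconv ih (hTC ih) (sub_nonneg.2 ht1) ht0 (sub_add_cancel 1 t)

section NormedSpace

variable {E : Type*} [SeminormedAddCommGroup E] [NormedSpace ℝ E] {T : E → E} {t : ℝ} {x : ℕ → E}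
  {q : E}

theorem antitone_norm_sub (hx : IsKrasnoselskijSeq T t x) (ht0 : 0 ≤ t) (ht1 : t ≤ 1)
    (hq : ∀ n, ‖T (x n) - q‖ ≤ ‖x n - q‖) : Antitone fun n ↦ ‖x n - q‖ := by
  refine antitone_nat_of_succ_le fun n ↦ ?_
  have hball : (1 - t) • x n + t • T (x n) ∈ closedBall q ‖x n - q‖ :=
    convex_closedBall q _ (mem_closedBall_iff_norm.2 le_rfl) (mem_closedBall_iff_norm.2 (hq n))
      (sub_nonneg.2 ht1) ht0 (sub_add_cancel 1 t)
  rwa [← hx n, mem_closedBall_iff_norm] at hball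

theorem exists_tendsto_norm_sub (hx : IsKrasnoselskijSeq T t x) (ht0 : 0 ≤ t) (ht1 : t ≤ 1)
    (hq : ∀ n, ‖T (x n) - q‖ ≤ ‖x n - q‖) : ∃ a, Tendsto (fun n ↦ ‖x n - q‖) atTop (𝓝 a) :=
  ⟨_, tendsto_atTop_ciInf (hx.antitone_norm_sub ht0 ht1 hq)
    ⟨0, forall_mem_range.2 fun _ ↦ norm_nonneg _⟩⟩

end NormedSpace

section InnerProductSpace

variable {H : Type*} [SeminormedAddCommGroup H] [InnerProductSpace ℝ H] {T : H → H} {t : ℝ}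
  {x : ℕ → H} {q : H}

theorem norm_sub_apply_sq_le (hx : IsKrasnoselskijSeq T t x) (ht0 : 0 ≤ t)
    (hq : ∀ n, ‖T (x n) - q‖ ≤ ‖x n - q‖) (n : ℕ) :
    t * (1 - t) * ‖x n - T (x n)‖ ^ 2 ≤ ‖x n - q‖ ^ 2 - ‖x (n + 1) - q‖ ^ 2 := by
  have hstep : x (n + 1) - q = (1 - t) • (x n - q) + t • (T (x n) - q) := by
    rw [hx n]
    module
  have hsq : t * ‖T (x n) - q‖ ^ 2 ≤ t * ‖x n - q‖ ^ 2 := by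
    gcongr
    exact hq n
  rw [hstep, norm_one_sub_smul_add_smul_sq, sub_sub_sub_cancel_right]
  linarith

theorem tendsto_sub_apply_zero (hx : IsKrasnoselskijSeq T t x) (ht0 : 0 < t) (ht1 : t < 1)
    (hq : ∀ n, ‖T (x n) - q‖ ≤ ‖x n - q‖) : Tendsto (fun n ↦ x n - T (x n)) atTop (𝓝 0) := by
  have hpos : 0 < t * (1 - t) := mul_pos ht0 (sub_pos.2 ht1)
  obtain ⟨a, ha⟩ := hx.exists_tendsto_norm_sub ht0.le ht1.le hq
  have hdecrease : Tendsto (fun n ↦ (‖x n - q‖ ^ 2 - ‖x (n + 1) - q‖ ^ 2) / (t * (1 - t)))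
      atTop (𝓝 0) := by
    simpa using
      ((ha.pow 2).sub ((ha.pow 2).comp (tendsto_add_atTop_nat 1))).div_const (t * (1 - t))
  have hsq : Tendsto (fun n ↦ ‖x n - T (x n)‖ ^ 2) atTop (𝓝 0) :=
    squeeze_zero (fun n ↦ sq_nonneg _)
      (fun n ↦ (le_div_iff₀' hpos).2 (hx.norm_sub_apply_sq_le ht0.le hq n)) hdecrease
  rw [tendsto_zero_iff_norm_tendsto_zero]
  simpa using hsq.sqrt

end InnerProductSpace

theorem exists_isFixedPt_tendsto_toWeakSpace {H : Type*} [NormedAddCommGroup H]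
    [InnerProductSpace ℝ H] [CompleteSpace H] {T : H → H} {t : ℝ} {x : ℕ → H} {q : H} {C : Set H}
    (hx : IsKrasnoselskijSeq T t x) (ht0 : 0 < t) (ht1 : t < 1) (hT : LipschitzOnWith 1 T C)
    (hcl : IsClosed C) (hconv : Convex ℝ C) (hTC : MapsTo T C C) (hx0 : x 0 ∈ C) (hqC : q ∈ C)
    (hq : IsFixedPt T q) :
    ∃ p ∈ C, IsFixedPt T p ∧
      Tendsto (fun n ↦ toWeakSpace ℝ H (x n)) atTop (𝓝 (toWeakSpace ℝ H p)) := by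
  have hxC : ∀ n, x n ∈ C := hx.mem ht0.le ht1.le hconv hTC hx0
  have hquasi : ∀ r ∈ C, IsFixedPt T r → ∀ n, ‖T (x n) - r‖ ≤ ‖x n - r‖ := fun r hrC hr n ↦ by
    simpa [hr.eq] using hT.norm_sub_le (hxC n) hrC
  have hreg := hx.tendsto_sub_apply_zero ht0 ht1 (hquasi q hqC hq)
  have hball : ∀ n, x n ∈ closedBall q ‖x 0 - q‖ := fun n ↦ mem_closedBall_iff_norm.2 <|
    hx.antitone_norm_sub ht0.le ht1.le (hquasi q hqC hq) n.zero_le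
  obtain ⟨R, hR⟩ := (isBounded_closedBall (x := q) (r := ‖x 0 - q‖)).exists_norm_le
  have hcompact : IsCompact (toWeakSpace ℝ H '' closedBall q ‖x 0 - q‖) :=
    isCompact_toWeakSpace_image (surjective_inclusionInDoubleDual ℝ H) isClosed_closedBall
      isBounded_closedBall (convex_closedBall q _)
  obtain ⟨p, ⟨hpC, hp⟩, hlim⟩ := exists_tendsto_toWeakSpace_of_tendsto_norm_sub
    (S := {p | p ∈ C ∧ IsFixedPt T p}) hcompact
    (.of_forall fun n ↦ mem_image_of_mem _ (hball n))
    (fun r hr ↦ hx.exists_tendsto_norm_sub ht0.le ht1.le (hquasi r hr.1 hr.2))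
    (fun r hr ↦ by
      have hrC : r ∈ C := mem_of_mapClusterPt_toWeakSpace hcl hconv (.of_forall hxC) hr
      exact ⟨hrC, isFixedPt_of_mapClusterPt_toWeakSpace hT hrC (.of_forall hxC)
        (isBoundedUnder_of ⟨R, fun n ↦ hR _ (hball n)⟩) hreg hr⟩)
  exact ⟨p, hpC, hp, hlim⟩

end IsKrasnoselskijSeq

end Krasnoselskij

theorem lipschitzOnWith_one_diag {X Y : Type*} [SeminormedAddCommGroup X]
    [SeminormedAddCommGroup Y] {C : Set X} {F : X → X → Y} {a b : ℝ} (hab : a + b ≤ 1)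
    (hF : ∀ x ∈ C, ∀ y ∈ C, ∀ u ∈ C, ∀ v ∈ C,
      ‖F x y - F u v‖ ≤ a * ‖x - u‖ + b * ‖y - v‖) :
    LipschitzOnWith 1 (fun z ↦ F z z) C := by
  refine LipschitzOnWith.of_dist_le_mul fun z hz w hw ↦ ?_
  rw [dist_eq_norm, dist_eq_norm]
  calc ‖F z z - F w w‖ ≤ a * ‖z - w‖ + b * ‖z - w‖ := hF z hz z hz w hw w hw
    _ = (a + b) * ‖z - w‖ := (add_mul _ _ _).symm
    _ ≤ (1 : ℝ≥0) * ‖z - w‖ := by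
      gcongr
      exact hab

/-- If `F : C × C → C` is weakly nonexpansive on a nonempty closed
bounded convex subset `C` of a real Hilbert space, then for every `λ ∈ (0,1)` and
`x₀ ∈ C`, the Krasnoselskij iteration `xₙ₊₁ = (1−λ)xₙ + λF(xₙ,xₙ)` converges weakly to
some `p ∈ C` with `F(p,p) = p`. -/
theorem krasnoselskij_weak_convergence
    {H : Type*} [NormedAddCommGroup H] [InnerProductSpace ℝ H] [CompleteSpace H]
    (C : Set H) (hne : C.Nonempty) (hcl : IsClosed C)
    (hbdd : Bornology.IsBounded C) (hconv : Convex ℝ C)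
    (F : H → H → H) (hmaps : ∀ x ∈ C, ∀ y ∈ C, F x y ∈ C)
    (a b : ℝ) (ha : 0 ≤ a) (hb : 0 ≤ b) (hab : a + b ≤ 1)
    (hF : ∀ x ∈ C, ∀ y ∈ C, ∀ u ∈ C, ∀ v ∈ C,
      ‖F x y - F u v‖ ≤ a * ‖x - u‖ + b * ‖y - v‖) :
    ∀ l : ℝ, 0 < l → l < 1 → ∀ x : ℕ → H, x 0 ∈ C →
      (∀ n, x (n + 1) = (1 - l) • x n + l • F (x n) (x n)) →
      ∃ p ∈ C, F p p = p ∧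
        ∀ f : H →L[ℝ] ℝ, Tendsto (fun n => f (x n)) atTop (𝓝 (f p)) := by
  intro t ht0 ht1 x hx0 hrec
  have hT : LipschitzOnWith 1 (fun z ↦ F z z) C := lipschitzOnWith_one_diag hab hF
  have hTC : MapsTo (fun z ↦ F z z) C C := fun z hz ↦ hmaps z hz z hz
  have hx : IsKrasnoselskijSeq (fun z ↦ F z z) t x := hrec
  obtain ⟨q, hqC, hq⟩ := exists_isFixedPt_of_lipschitzOnWith_one hT hcl hbdd hconv hTC hne
  obtain ⟨p, hpC, hp, hlim⟩ :=
    hx.exists_isFixedPt_tendsto_toWeakSpace ht0 ht1 hT hcl hconv hTC hx0 hqC hq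
  exact ⟨p, hpC, hp, tendsto_toWeakSpace_nhds_iff.1 hlim⟩
end
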